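/- arXiv:1201.2718 — 6 statements merged into one kernel-verified Lean document; each statement's English description precedes it below -/
import Mathlib

section
/- For every natural number n ≥ 0 and every real x ≥ 0, the polynomial identity Σ_{k=0}^{n} C(2n+1, 2k+1) (1+x)^k x^(n−k) = Π_{k=1}^{n} (1 + x / sin²(π(2k−1)/(2(2n+1)))) holds; in particular, the zeros of this degree-n polynomial are exactly the negative reals −sin²(π(2k−1)/(2(2n+1))), k = 1, …, n. -/
/-!
Both sides are polynomials in `x` of degree at most `n`, so it suffices that they agree at the
`n + 1` distinct points `0` and `-sin² θ_k`, where `θ_k = π (2k - 1) / (2 (2n + 1))` for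
`1 ≤ k ≤ n`. At `0` both are `1`. At `-sin² θ_k` the product has a vanishing factor. For the sum,
splitting the binomial expansion by parity gives
`(c + d)^(2n+1) + (c - d)^(2n+1) = 2 c ∑ C(2n+1, 2k+1) (c²)^k (d²)^(n-k)`; with `c = cos θ` and
`d = i sin θ` this says that `cos θ` times the sum at `-sin² θ` is `cos ((2n+1) θ)`, which is zero
at `θ = θ_k`, while `cos θ_k ≠ 0`.
-/

open Polynomial in
/-- The left-hand side as a polynomial. -/
noncomputable def sumPoly (n : ℕ) : ℝ[X] :=
  ∑ k ∈ Finset.range (n + 1),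
    C (Nat.choose (2 * n + 1) (2 * k + 1) : ℝ) * (1 + X) ^ k * X ^ (n - k)

/-- The angle `π (2k - 1) / (2 (2n + 1))`. -/
noncomputable def node (n k : ℕ) : ℝ :=
  Real.pi * (2 * (k : ℝ) - 1) / (2 * (2 * n + 1))

open Polynomial in
/-- The right-hand side as a polynomial. -/
noncomputable def prodPoly (n : ℕ) : ℝ[X] :=
  ∏ k ∈ Finset.Icc 1 n, (1 + C ((Real.sin (node n k) ^ 2)⁻¹) * X)

lemma sum_range_two_mul {R : Type*} [CommRing R] (f : ℕ → R) (m : ℕ) :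
    ∑ i ∈ Finset.range (2 * m), f i = ∑ k ∈ Finset.range m, (f (2 * k) + f (2 * k + 1)) := by
  induction m with
  | zero => simp
  | succ m ih =>
    rw [show 2 * (m + 1) = 2 * m + 1 + 1 by ring, Finset.sum_range_succ, Finset.sum_range_succ,
      Finset.sum_range_succ, ih]
    ring

/-- The odd part in `c` of the binomial expansion of `(c + d)^(2n+1)`. -/
lemma add_pow_add_sub_pow {R : Type*} [CommRing R] (c d : R) (n : ℕ) :
    (c + d) ^ (2 * n + 1) + (c - d) ^ (2 * n + 1) =
      2 * (c * ∑ k ∈ Finset.range (n + 1),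
        (Nat.choose (2 * n + 1) (2 * k + 1) : R) * (c ^ 2) ^ k * (d ^ 2) ^ (n - k)) := by
  rw [sub_eq_add_neg, add_pow, add_pow, ← Finset.sum_add_distrib,
    show 2 * n + 1 + 1 = 2 * (n + 1) by ring, sum_range_two_mul, Finset.mul_sum, Finset.mul_sum]
  refine Finset.sum_congr rfl fun k hk => ?_
  have hk : k ≤ n := Nat.lt_succ_iff.mp (Finset.mem_range.mp hk)
  have e1 : 2 * n + 1 - 2 * k = 2 * (n - k) + 1 := by omega
  have e2 : 2 * n + 1 - (2 * k + 1) = 2 * (n - k) := by omega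
  rw [e1, e2, Odd.neg_pow ⟨n - k, rfl⟩, Even.neg_pow ⟨n - k, by ring⟩, ← pow_mul, ← pow_mul]
  ring

lemma cos_mul_sum (n : ℕ) (θ : ℝ) :
    Real.cos θ * ∑ k ∈ Finset.range (n + 1),
        (Nat.choose (2 * n + 1) (2 * k + 1) : ℝ) * (1 + -Real.sin θ ^ 2) ^ k *
          (-Real.sin θ ^ 2) ^ (n - k) = Real.cos ((2 * n + 1) * θ) := by
  have hc : 1 + -Real.sin θ ^ 2 = Real.cos θ ^ 2 := by
    linarith [Real.sin_sq_add_cos_sq θ]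
  have h := add_pow_add_sub_pow (Complex.cos θ) (Complex.sin θ * Complex.I) n
  have h2 : (Complex.cos θ - Complex.sin θ * Complex.I) =
      Complex.cos (-θ) + Complex.sin (-θ) * Complex.I := by
    rw [Complex.cos_neg, Complex.sin_neg]; ring
  rw [h2, Complex.cos_add_sin_mul_I_pow, Complex.cos_add_sin_mul_I_pow, mul_neg,
    Complex.cos_neg, Complex.sin_neg, mul_pow, Complex.I_sq, mul_neg_one] at h
  rw [hc]
  apply Complex.ofReal_injective
  push_cast at h ⊢
  linear_combination (-1 / 2) * h

lemma node_mem {n k : ℕ} (hk : k ∈ Finset.Icc 1 n) :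
    0 < node n k ∧ node n k < Real.pi / 2 := by
  obtain ⟨h1, h2⟩ := Finset.mem_Icc.mp hk
  have h1 : (1 : ℝ) ≤ k := by exact_mod_cast h1
  have h2 : (k : ℝ) ≤ n := by exact_mod_cast h2
  have hpi := Real.pi_pos
  unfold node
  constructor
  · apply div_pos (mul_pos hpi _) <;> linarith
  · rw [div_lt_div_iff₀ (by positivity) (by norm_num)]
    nlinarith

lemma sin_node_pos {n k : ℕ} (hk : k ∈ Finset.Icc 1 n) : 0 < Real.sin (node n k) :=
  Real.sin_pos_of_pos_of_lt_pi (node_mem hk).1 (by linarith [(node_mem hk).2, Real.pi_pos])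

lemma cos_mul_node (n k : ℕ) : Real.cos ((2 * n + 1) * node n k) = 0 := by
  rw [Real.cos_eq_zero_iff]
  refine ⟨(k : ℤ) - 1, ?_⟩
  unfold node
  push_cast
  field_simp
  ring

lemma injOn_node (n : ℕ) :
    Set.InjOn (fun k => -Real.sin (node n k) ^ 2) (Finset.Icc 1 n : Finset ℕ) := by
  intro a ha b hb hab
  have ha := Finset.mem_coe.mp ha
  have hb := Finset.mem_coe.mp hb
  have h1 : Real.sin (node n a) = Real.sin (node n b) := by
    have := neg_injective hab
    exact (pow_left_inj₀ (sin_node_pos ha).le (sin_node_pos hb).le two_ne_zero).mp this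
  have h2 : node n a = node n b := by
    have := Real.pi_pos
    refine Real.injOn_sin ⟨?_, ?_⟩ ⟨?_, ?_⟩ h1 <;>
      linarith [(node_mem ha).1, (node_mem ha).2, (node_mem hb).1, (node_mem hb).2]
  unfold node at h2
  have hpi := Real.pi_ne_zero
  have hn : (2 * (n : ℝ) + 1) ≠ 0 := by positivity
  field_simp at h2
  have : (a : ℝ) = b := by linarith
  exact_mod_cast this

lemma sumPoly_eval (n : ℕ) (x : ℝ) : (sumPoly n).eval x =
    ∑ k ∈ Finset.range (n + 1),
        (Nat.choose (2 * n + 1) (2 * k + 1) : ℝ) * (1 + x) ^ k * x ^ (n - k) := by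
  simp [sumPoly, Polynomial.eval_finsetSum]

lemma prodPoly_eval (n : ℕ) (x : ℝ) : (prodPoly n).eval x =
    ∏ k ∈ Finset.Icc 1 n, (1 + x / Real.sin (node n k) ^ 2) := by
  simp only [prodPoly, Polynomial.eval_prod, Polynomial.eval_add, Polynomial.eval_mul,
    Polynomial.eval_C, Polynomial.eval_X, Polynomial.eval_one, div_eq_mul_inv,
    mul_comm x]

open Polynomial in
lemma sumPoly_natDegree_le (n : ℕ) : (sumPoly n).natDegree ≤ n := by
  refine natDegree_sum_le_of_forall_le _ _ fun k hk => ?_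
  have hk : k ≤ n := Nat.lt_succ_iff.mp (Finset.mem_range.mp hk)
  have h : ((1 : ℝ[X]) + X).natDegree ≤ 1 := by compute_degree
  calc _ ≤ (0 + k * 1) + (n - k) * 1 := by
        refine natDegree_mul_le_of_le (natDegree_mul_le_of_le (natDegree_C _).le ?_) ?_
        · exact natDegree_pow_le_of_le k h
        · exact natDegree_pow_le_of_le _ natDegree_X_le
    _ = n := by omega

open Polynomial in
lemma prodPoly_natDegree_le (n : ℕ) : (prodPoly n).natDegree ≤ n := by
  refine (natDegree_prod_le _ _).trans ?_
  calc _ ≤ ∑ k ∈ Finset.Icc 1 n, 1 := Finset.sum_le_sum fun k _ => by compute_degree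
    _ = n := by simp

lemma sumPoly_eq_prodPoly (n : ℕ) : sumPoly n = prodPoly n := by
  classical
  have h0 : (0 : ℝ) ∉ (Finset.Icc 1 n).image (fun k => -Real.sin (node n k) ^ 2) := by
    intro h
    obtain ⟨k, hk, h⟩ := Finset.mem_image.mp h
    have := pow_pos (sin_node_pos hk) 2
    linarith
  have hcard : (insert 0 ((Finset.Icc 1 n).image
      (fun k => -Real.sin (node n k) ^ 2))).card = n + 1 := by
    rw [Finset.card_insert_of_notMem h0, Finset.card_image_of_injOn (injOn_node n)]
    simp
  refine Polynomial.eq_of_degrees_lt_of_eval_finset_eq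
    (insert 0 ((Finset.Icc 1 n).image (fun k => -Real.sin (node n k) ^ 2))) ?_ ?_ ?_
  · rw [hcard]
    exact Polynomial.degree_le_natDegree.trans_lt
      (by exact_mod_cast Nat.lt_succ_of_le (sumPoly_natDegree_le n))
  · rw [hcard]
    exact Polynomial.degree_le_natDegree.trans_lt
      (by exact_mod_cast Nat.lt_succ_of_le (prodPoly_natDegree_le n))
  · intro x hx
    rcases Finset.mem_insert.mp hx with rfl | hx
    · rw [sumPoly_eval, prodPoly_eval, Finset.sum_eq_single n]
      · simp
      · intro k hk hkn
        have : n - k ≠ 0 := by have := Finset.mem_range.mp hk; omega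
        simp [this]
      · simp
    · obtain ⟨j, hj, rfl⟩ := Finset.mem_image.mp hx
      rw [sumPoly_eval, prodPoly_eval]
      have hs := (sin_node_pos hj).ne'
      have hc : Real.cos (node n j) ≠ 0 :=
        (Real.cos_pos_of_mem_Ioo
          ⟨by linarith [(node_mem hj).1, Real.pi_pos], (node_mem hj).2⟩).ne'
      rw [Finset.prod_eq_zero hj (by field_simp; ring)]
      have h := cos_mul_sum n (node n j)
      rw [cos_mul_node] at h
      exact (mul_eq_zero.mp h).resolve_left hc

open Real Finset

theorem P_factorization (n : ℕ) (x : ℝ) (hx : 0 ≤ x) :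
    ∑ k ∈ Finset.range (n + 1),
        (Nat.choose (2 * n + 1) (2 * k + 1) : ℝ) * (1 + x) ^ k * x ^ (n - k) =
      ∏ k ∈ Finset.Icc 1 n,
        (1 + x / Real.sin (Real.pi * (2 * (k : ℝ) - 1) / (2 * (2 * n + 1))) ^ 2) := by
  rw [← sumPoly_eval, sumPoly_eq_prodPoly, prodPoly_eval]
  rfl
end

section
/- For every natural number n ≥ 0 and every real x ≥ 0, with a_k = 1/sin²(π(2k−1)/(2(2n+1))) for k = 1, …, n, one has ( (1/√(2π)) ∫_{ℝ} e^{−x u²/2} e^{−u²/2} du ) · Π_{k=1}^{n} ( ∫_{0}^{∞} e^{−x a_k t} e^{−t} dt ) = φ_{2n+1}(x); that is, φ_{2n+1} is the Laplace transform of the random variable K = 𝒩²/2 + Σ_{k=1}^{n} a_k 𝐞_k, where 𝒩 is standard Gaussian and 𝐞_1, …, 𝐞_n are independent standard exponential variables. -/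
/-!
The Gaussian integral equals `1 / √(1 + x)` and the `k`-th exponential integral equals
`1 / (1 + x / sin² θ_k)` with `θ_k = π(2k-1)/(2(2n+1))`, so the claim is the product formula
`(G₊ ^ (2n+1) + G₋ ^ (2n+1)) / 2 = √(1+x) ∏ (1 + x / sin² θ_k)`.

Writing `√x = sinh t`, one has `G₊ = exp t`, `G₋ = exp (-t)` and `√(1+x) = cosh t`, so the left side
is `cosh ((2n+1) t) = T_{2n+1}(√(1+x))` with `T` the Chebyshev polynomial of the first kind
(`eval_T_sqrt_one_add`). The roots of `T_{2n+1}` are `0` and `± cos θ_k`, hence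
`T_{2n+1}(c) = A c ∏ (c² - cos² θ_k)` for the leading coefficient `A` (`eval_T_odd`). At `c = 1` this
reads `1 = A ∏ sin² θ_k`, which eliminates `A`; at `c = √(1+x)` the factors are `x + sin² θ_k`.
-/

open Real Finset MeasureTheory

/-- Product formula for an odd-index Chebyshev polynomial, opposite roots being paired. -/
lemma eval_T_odd (n : ℕ) : ∃ A : ℝ, ∀ c : ℝ,
    (Polynomial.Chebyshev.T ℝ ((2 * n + 1 : ℕ) : ℤ)).eval c = A * (c * ∏ k ∈ Finset.range n,
      (c ^ 2 - cos (π * (2 * ((k + 1 : ℕ) : ℝ) - 1) / (2 * (2 * n + 1))) ^ 2)) := by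
  set P := Polynomial.Chebyshev.T ℝ ((2 * n + 1 : ℕ) : ℤ) with hP
  refine ⟨P.leadingCoeff, fun c => ?_⟩
  have hroots : P.roots = Multiset.map
      (fun k : ℕ ↦ cos ((2 * k + 1) * π / (2 * (2 * n + 1 : ℕ)))) (.range (2 * n + 1)) := by
    rw [hP, Polynomial.Chebyshev.roots_T_real, Finset.image_val, Multiset.dedup_eq_self.2]
    · rfl
    · exact Polynomial.Chebyshev.roots_T_real_nodup (2 * n + 1)
  have hcard : P.roots.card = P.natDegree := by
    rw [hroots, hP, Polynomial.Chebyshev.natDegree_T]; simp; omega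
  have hfac := Polynomial.C_leadingCoeff_mul_prod_multiset_X_sub_C hcard
  have hne : (2 * (n : ℝ) + 1) ≠ 0 := by positivity
  have heval : P.eval c = P.leadingCoeff * ∏ k ∈ Finset.range (2 * n + 1),
      (c - cos ((2 * k + 1) * π / (2 * (2 * n + 1 : ℕ)))) := by
    conv_lhs => rw [← hfac, hroots]
    rw [Polynomial.eval_mul, Polynomial.eval_C, Polynomial.eval_multiset_prod,
      Multiset.map_map, Multiset.map_map]
    simp only [Function.comp_def, Polynomial.eval_sub, Polynomial.eval_X, Polynomial.eval_C]
    rfl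
  rw [heval]
  congr 1
  rw [show 2 * n + 1 = n + (n + 1) by ring, Finset.prod_range_add, Finset.prod_range_succ',
    ← Finset.prod_range_reflect (fun k : ℕ => c - cos ((2 * ((n + (k + 1) : ℕ) : ℝ) + 1) * π /
      (2 * ((n + (n + 1) : ℕ) : ℝ)))), mul_comm _ (_ - _), mul_left_comm,
    ← Finset.prod_mul_distrib]
  congr 1
  · -- the middle root is `cos (π / 2) = 0`
    rw [show (2 * ((n + 0 : ℕ) : ℝ) + 1) * π / (2 * ((n + (n + 1) : ℕ) : ℝ)) = π / 2 by
      push_cast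
      have : (n : ℝ) + (n + 1) ≠ 0 := by positivity
      field_simp
      ring, cos_pi_div_two, sub_zero]
  · refine Finset.prod_congr rfl fun k hk => ?_
    have hk := Finset.mem_range.1 hk
    have hne' : (n : ℝ) + (n + 1) ≠ 0 := by positivity
    obtain ⟨j, rfl⟩ : ∃ j, n = k + 1 + j := ⟨n - (k + 1), by omega⟩
    have h1 : (2 * (k : ℝ) + 1) * π / (2 * ((k + 1 + j + (k + 1 + j + 1) : ℕ) : ℝ)) =
        π * (2 * ((k + 1 : ℕ) : ℝ) - 1) / (2 * (2 * ((k + 1 + j : ℕ) : ℝ) + 1)) := by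
      push_cast
      congr 1 <;> ring
    have h2 : (2 * ((k + 1 + j + (k + 1 + j - 1 - k + 1) : ℕ) : ℝ) + 1) * π /
          (2 * ((k + 1 + j + (k + 1 + j + 1) : ℕ) : ℝ)) =
        π - π * (2 * ((k + 1 : ℕ) : ℝ) - 1) / (2 * (2 * ((k + 1 + j : ℕ) : ℝ) + 1)) := by
      rw [show k + 1 + j - 1 - k = j by omega]
      push_cast at *
      rw [eq_sub_iff_add_eq, show (k : ℝ) + 1 + j + (k + 1 + j + 1) = 2 * (k + 1 + j) + 1 by ring]
      field_simp
      ring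
    rw [h1, h2, cos_pi_sub]
    ring

lemma eval_T_sqrt_one_add (m : ℕ) {x : ℝ} (hx : 0 ≤ x) :
    (Polynomial.Chebyshev.T ℝ (m : ℤ)).eval √(1 + x) =
      ((√(1 + x) + √x) ^ m + (√(1 + x) - √x) ^ m) / 2 := by
  have hc : cosh (arsinh √x) = √(1 + x) := by rw [cosh_arsinh, sq_sqrt hx]
  have hs : sinh (arsinh √x) = √x := sinh_arsinh _
  have hp : √(1 + x) + √x = exp (arsinh √x) := by rw [← cosh_add_sinh, hc, hs]
  have hm : √(1 + x) - √x = exp (-arsinh √x) := by rw [← cosh_sub_sinh, hc, hs]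
  rw [hp, hm, ← hc, Polynomial.Chebyshev.T_real_cosh, cosh_eq, ← exp_nat_mul, ← exp_nat_mul]
  simp

lemma gaussian_factor {x : ℝ} (hx : 0 ≤ x) :
    (1 / √(2 * π)) * (∫ u : ℝ, exp (-x * u ^ 2 / 2) * exp (-u ^ 2 / 2)) = (√(1 + x))⁻¹ := by
  have h : ∀ u : ℝ, exp (-x * u ^ 2 / 2) * exp (-u ^ 2 / 2) = exp (-((1 + x) / 2) * u ^ 2) := by
    intro u
    rw [← exp_add]
    congr 1
    ring
  simp_rw [h]
  rw [integral_gaussian, show π / ((1 + x) / 2) = (2 * π) / (1 + x) by field_simp,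
    sqrt_div (by positivity)]
  have : √(2 * π) ≠ 0 := by positivity
  field_simp

lemma exponential_factor {b : ℝ} (hb : 0 ≤ b) :
    (∫ t in Set.Ioi (0 : ℝ), exp (-b * t) * exp (-t)) = (1 + b)⁻¹ := by
  have h : ∀ t : ℝ, exp (-b * t) * exp (-t) = exp (-(1 + b) * t) := by
    intro t
    rw [← exp_add]
    congr 1
    ring
  simp_rw [h]
  rw [integral_exp_mul_Ioi (by linarith)]
  rw [mul_zero, exp_zero, neg_div_neg_eq, one_div]

theorem laplace_transform_phi_odd (n : ℕ) (x : ℝ) (hx : 0 ≤ x) :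
    (1 / Real.sqrt (2 * Real.pi)) *
        (∫ u : ℝ, Real.exp (-x * u ^ 2 / 2) * Real.exp (-u ^ 2 / 2)) *
      ∏ k ∈ Finset.Icc 1 n,
        (∫ t in Set.Ioi (0 : ℝ),
          Real.exp (-x * (1 / Real.sin (Real.pi * (2 * (k : ℝ) - 1) / (2 * (2 * n + 1))) ^ 2) * t)
            * Real.exp (-t)) =
      2 / ((Real.sqrt (1 + x) + Real.sqrt x) ^ (2 * n + 1)
            + (Real.sqrt (1 + x) - Real.sqrt x) ^ (2 * n + 1)) := by
  have hrange : ∀ f : ℕ → ℝ, ∏ k ∈ Finset.Icc 1 n, f k = ∏ k ∈ Finset.range n, f (k + 1) := by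
    intro f
    rw [Finset.range_eq_Ico, Finset.prod_Ico_add' f 0 n 1]
    rfl
  rw [gaussian_factor hx, hrange]
  set s : ℕ → ℝ := fun k => sin (π * (2 * ((k + 1 : ℕ) : ℝ) - 1) / (2 * (2 * n + 1))) with hs
  have hexp : ∀ k : ℕ, (∫ t in Set.Ioi (0 : ℝ),
      exp (-x * (1 / sin (π * (2 * ((k + 1 : ℕ) : ℝ) - 1) / (2 * (2 * n + 1))) ^ 2) * t)
        * exp (-t)) = (1 + x * (1 / s k ^ 2))⁻¹ := by
    intro k
    rw [← exponential_factor (b := x * (1 / s k ^ 2)) (by positivity)]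
    simp only [hs, neg_mul]
  rw [Finset.prod_congr rfl fun k _ => hexp k, Finset.prod_inv_distrib, ← mul_inv]
  obtain ⟨A, hA⟩ := eval_T_odd n
  have h1 := hA 1
  have hx' := hA √(1 + x)
  rw [eval_T_sqrt_one_add _ hx, sq_sqrt (by linarith)] at hx'
  rw [Polynomial.Chebyshev.T_eval_one] at h1
  have hspos : ∀ k ∈ Finset.range n, s k ≠ 0 := by
    intro k hk
    have hk : (k : ℝ) + 1 ≤ n := by exact_mod_cast Finset.mem_range.1 hk
    refine (sin_pos_of_pos_of_lt_pi ?_ ?_).ne'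
    · push_cast
      have : 0 < 2 * ((k : ℝ) + 1) - 1 := by linarith [(Nat.cast_nonneg k : (0 : ℝ) ≤ k)]
      positivity
    · push_cast
      rw [div_lt_iff₀ (by positivity)]
      exact mul_lt_mul_of_pos_left (by linarith) pi_pos
  have h1' : (1 : ℝ) = A * ∏ k ∈ Finset.range n, s k ^ 2 := by
    rw [h1, one_mul]
    congr 1
    refine Finset.prod_congr rfl fun k _ => ?_
    simp only [hs, sin_sq]
    ring
  have hx'' : ∏ k ∈ Finset.range n,
      (1 + x - cos (π * (2 * ((k + 1 : ℕ) : ℝ) - 1) / (2 * (2 * n + 1))) ^ 2) =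
      (∏ k ∈ Finset.range n, s k ^ 2) * ∏ k ∈ Finset.range n, (1 + x * (1 / s k ^ 2)) := by
    rw [← Finset.prod_mul_distrib]
    refine Finset.prod_congr rfl fun k hk => ?_
    have := hspos k hk
    have h2 : s k ^ 2 * (1 + x * (1 / s k ^ 2)) = s k ^ 2 + x := by field_simp
    rw [h2]
    simp only [hs, sin_sq]
    ring
  rw [hx''] at hx'
  have key : √(1 + x) * ∏ k ∈ Finset.range n, (1 + x * (1 / s k ^ 2)) =
      ((√(1 + x) + √x) ^ (2 * n + 1) + (√(1 + x) - √x) ^ (2 * n + 1)) / 2 := by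
    rw [hx']
    linear_combination (√(1 + x) * ∏ k ∈ Finset.range n, (1 + x * (1 / s k ^ 2))) * h1'
  rw [key, inv_div]
end

section
/- For every natural number n ≥ 0 and every real x ≥ 0, one has φ_{2n+1}(x) = exp( − ∫_{0}^{∞} ((1 − e^{−xz})/z) · ( (1/2) e^{−z} + Σ_{k=1}^{n} e^{−z sin²(π(2k−1)/(2(2n+1)))} ) dz ); that is, φ_{2n+1} is the Laplace transform of an infinitely divisible positive random variable with Lévy measure (dz/z)( (1/2)e^{−z} + Σ_{k=1}^{n} e^{−z sin²(π(2k−1)/(2(2n+1)))} ) on (0, ∞). -/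
open Real Finset MeasureTheory

/-!
Frullani's integral gives `∫₀^∞ (1 - e^{-xz}) / z · e^{-az} dz = log ((a + x) / a)` for `a > 0`, so
the right-hand side equals `(1 + x)^{-1/2} ∏ₖ sₖ / (sₖ + x)` with
`sₖ = sin² (π (2k - 1) / (2 (2n + 1)))`.

For the left-hand side put `√x = sinh t`, so that `√(1 + x) = cosh t` and `√(1 + x) ± √x = e^{±t}`;
the denominator is then `2 cosh ((2n + 1) t) = 2 T_{2n+1} (cosh t)`, where `T` is the Chebyshev
polynomial of the first kind. Its roots are `0` and the pairs `± cos θₖ`, hence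
`T_{2n+1} (y) = c · y ∏ₖ (y² - cos² θₖ)` (`eval_T_odd_eq`). At `y = cosh t` the factors are
`x + sin² θₖ`, and the constant `c` is fixed by `T_{2n+1} (1) = 1`.
-/

/-! ### The Frullani integral -/

lemma integrableOn_levy (x a : ℝ) (hx : 0 ≤ x) (ha : 0 < a) :
    IntegrableOn (fun z : ℝ => ((1 - Real.exp (-x * z)) / z) * Real.exp (-z * a))
      (Set.Ioi (0 : ℝ)) := by
  have hdom : IntegrableOn (fun z : ℝ => x * Real.exp (-a * z)) (Set.Ioi (0 : ℝ)) :=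
    (exp_neg_integrableOn_Ioi 0 ha).const_mul x
  refine Integrable.mono' hdom (by fun_prop) ?_
  filter_upwards [ae_restrict_mem measurableSet_Ioi] with z hz
  have hz : 0 < z := hz
  have h0 : 0 ≤ 1 - Real.exp (-x * z) := by
    have : Real.exp (-x * z) ≤ 1 := Real.exp_le_one_iff.mpr (by nlinarith)
    linarith
  have h1 : (1 - Real.exp (-x * z)) / z ≤ x := by
    rw [div_le_iff₀ hz]
    have := Real.add_one_le_exp (-x * z)
    linarith
  rw [Real.norm_of_nonneg (by positivity), show -z * a = -a * z by ring]
  gcongr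

lemma integral_levy (x a : ℝ) (hx : 0 ≤ x) (ha : 0 < a) :
    ∫ z in Set.Ioi (0 : ℝ), ((1 - Real.exp (-x * z)) / z) * Real.exp (-z * a)
      = Real.log ((a + x) / a) := by
  have hfun : (fun z : ℝ => ((1 - Real.exp (-x * z)) / z) * Real.exp (-z * a))
      = fun z : ℝ => z⁻¹ • (Real.exp (-(a * z)) - Real.exp (-((a + x) * z))) := by
    funext z
    rw [show -((a + x) * z) = -x * z + -z * a by ring, Real.exp_add,
      show -(a * z) = -z * a by ring, smul_eq_mul]
    ring
  have hintble := integrableOn_levy x a hx ha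
  rw [hfun] at hintble ⊢
  have hcont : Continuous fun z : ℝ => Real.exp (-z) := by fun_prop
  have h := Frullani.integral_Ioi_eq (f := fun z : ℝ => Real.exp (-z)) (L := 1) (R := 0)
    (hcont.locallyIntegrable.locallyIntegrableOn _) ha (show 0 < a + x by linarith)
    (by
      have := hcont.tendsto 0
      simp only [neg_zero, Real.exp_zero] at this
      exact this.mono_left nhdsWithin_le_nhds)
    Real.tendsto_exp_neg_atTop_nhds_zero hintble
  simpa using h

/-! ### Factorization of the odd Chebyshev polynomials -/

lemma eval_T_eq_prod (m : ℕ) : ∃ c : ℝ, ∀ y : ℝ, (Polynomial.Chebyshev.T ℝ m).eval y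
    = c * ∏ k ∈ range m, (y - Real.cos ((2 * (k : ℝ) + 1) * π / (2 * m))) := by
  have hinj : Set.InjOn (fun k : ℕ => Real.cos ((2 * (k : ℝ) + 1) * π / (2 * m)))
      (range m : Finset ℕ) :=
    (range m).nodup_map_iff_injOn.mp (Polynomial.Chebyshev.roots_T_real_nodup m)
  have hcard : Multiset.card (Polynomial.Chebyshev.T ℝ m).roots
      = (Polynomial.Chebyshev.T ℝ m).natDegree := by
    rw [Polynomial.Chebyshev.roots_T_real, Finset.card_val, card_image_of_injOn hinj, card_range,
      Polynomial.Chebyshev.natDegree_T, Int.natAbs_natCast]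
  refine ⟨(Polynomial.Chebyshev.T ℝ m).leadingCoeff, fun y => ?_⟩
  conv_lhs => rw [← Polynomial.C_leadingCoeff_mul_prod_multiset_X_sub_C hcard]
  rw [Polynomial.Chebyshev.roots_T_real]
  change Polynomial.eval y (_ * ∏ a ∈ image _ _, (Polynomial.X - Polynomial.C a)) = _
  rw [prod_image hinj, Polynomial.eval_mul, Polynomial.eval_prod]
  simp

/-- The roots `k` and `2n - k` of `T_{2n+1}` are opposite, and the middle one is `0`. -/
lemma eval_T_odd_eq (n : ℕ) : ∃ c : ℝ, ∀ y : ℝ,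
    (Polynomial.Chebyshev.T ℝ ((2 * n + 1 : ℕ) : ℤ)).eval y
    = c * (y * ∏ k ∈ range n,
        (y ^ 2 - Real.cos (π * (2 * (k : ℝ) + 1) / (2 * (2 * n + 1))) ^ 2)) := by
  obtain ⟨c, hc⟩ := eval_T_eq_prod (2 * n + 1)
  refine ⟨c, fun y => ?_⟩
  rw [hc y, show 2 * n + 1 = n + (n + 1) by ring, prod_range_add, prod_range_succ',
    ← prod_range_reflect (fun k => y - Real.cos ((2 * ((n + (k + 1) : ℕ) : ℝ) + 1) * π /
      (2 * ((n + (n + 1) : ℕ) : ℝ)))), ← mul_assoc (∏ _ ∈ _, _),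
    ← prod_mul_distrib, mul_comm y]
  have hmid : Real.cos ((2 * ((n + 0 : ℕ) : ℝ) + 1) * π / (2 * ((n + (n + 1) : ℕ) : ℝ))) = 0 := by
    rw [← Real.cos_pi_div_two]
    congr 1
    push_cast
    field_simp
    ring
  rw [hmid, sub_zero]
  congr 2
  refine prod_congr rfl fun k hk => ?_
  have hk' : k < n := mem_range.mp hk
  have hrefl : Real.cos ((2 * ((n + (n - 1 - k + 1) : ℕ) : ℝ) + 1) * π /
      (2 * ((n + (n + 1) : ℕ) : ℝ))) = -Real.cos (π * (2 * (k : ℝ) + 1) / (2 * (2 * n + 1))) := by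
    rw [← Real.cos_pi_sub, show n + (n - 1 - k + 1) = 2 * n - k by omega,
      Nat.cast_sub (by omega)]
    congr 1
    push_cast
    field_simp
    ring
  have hself : (2 * (k : ℝ) + 1) * π / (2 * ((n + (n + 1) : ℕ) : ℝ))
      = π * (2 * (k : ℝ) + 1) / (2 * (2 * n + 1)) := by
    push_cast
    ring
  rw [hrefl, hself]
  ring

lemma sin_node_pos_s10 (n k : ℕ) (hk : k ∈ Icc 1 n) :
    0 < Real.sin (π * (2 * (k : ℝ) - 1) / (2 * (2 * n + 1))) := by
  obtain ⟨h1, h2⟩ := mem_Icc.mp hk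
  have h1' : (1 : ℝ) ≤ k := by exact_mod_cast h1
  have h2' : (k : ℝ) ≤ n := by exact_mod_cast h2
  apply Real.sin_pos_of_pos_of_lt_pi
  · have : 0 < 2 * (k : ℝ) - 1 := by linarith
    positivity
  · rw [div_lt_iff₀ (by positivity)]
    exact mul_lt_mul_of_pos_left (by linarith) Real.pi_pos

lemma cosh_odd_mul (n : ℕ) (t : ℝ) :
    Real.cosh ((2 * n + 1) * t) = Real.cosh t * ∏ k ∈ Icc 1 n,
      ((Real.sin (π * (2 * (k : ℝ) - 1) / (2 * (2 * n + 1))) ^ 2 + Real.sinh t ^ 2) /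
        Real.sin (π * (2 * (k : ℝ) - 1) / (2 * (2 * n + 1))) ^ 2) := by
  obtain ⟨c, hc⟩ := eval_T_odd_eq n
  have hidx : ∀ y : ℝ, ∏ k ∈ range n,
      (y ^ 2 - Real.cos (π * (2 * (k : ℝ) + 1) / (2 * (2 * n + 1))) ^ 2)
      = ∏ k ∈ Icc 1 n, (Real.sin (π * (2 * (k : ℝ) - 1) / (2 * (2 * n + 1))) ^ 2 + (y ^ 2 - 1)) := by
    intro y
    rw [range_eq_Ico, ← Ico_add_one_right_eq_Icc, ← prod_Ico_add' _ 0 n 1]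
    refine prod_congr rfl fun k _ => ?_
    rw [Real.cos_sq']
    push_cast
    ring_nf
  simp only [hidx] at hc
  have hone := hc 1
  rw [Polynomial.Chebyshev.T_eval_one] at hone
  have ht := hc (Real.cosh t)
  rw [Polynomial.Chebyshev.T_real_cosh, Real.cosh_sq] at ht
  simp only [one_pow, sub_self, add_zero, add_sub_cancel_right, one_mul] at hone ht
  have hP : ∏ k ∈ Icc 1 n, Real.sin (π * (2 * (k : ℝ) - 1) / (2 * (2 * n + 1))) ^ 2 ≠ 0 :=
    prod_ne_zero_iff.mpr fun k hk => (pow_pos (sin_node_pos_s10 n k hk) 2).ne'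
  push_cast at ht
  rw [ht, prod_div_distrib, eq_div_of_mul_eq hP hone.symm]
  ring

theorem phi_odd_levy_khintchine (n : ℕ) (x : ℝ) (hx : 0 ≤ x) :
    2 / ((Real.sqrt (1 + x) + Real.sqrt x) ^ (2 * n + 1)
          + (Real.sqrt (1 + x) - Real.sqrt x) ^ (2 * n + 1)) =
      Real.exp (-∫ z in Set.Ioi (0 : ℝ),
        ((1 - Real.exp (-x * z)) / z) *
          ((1 / 2) * Real.exp (-z) +
            ∑ k ∈ Finset.Icc 1 n,
              Real.exp (-z * Real.sin (Real.pi * (2 * (k : ℝ) - 1) / (2 * (2 * n + 1))) ^ 2))) := by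
  set s : ℕ → ℝ := fun k => Real.sin (Real.pi * (2 * (k : ℝ) - 1) / (2 * (2 * n + 1))) ^ 2 with hs
  have hspos : ∀ k ∈ Icc 1 n, 0 < s k := fun k hk => pow_pos (sin_node_pos_s10 n k hk) 2
  have hintegral : ∫ z in Set.Ioi (0 : ℝ), ((1 - Real.exp (-x * z)) / z) *
      ((1 / 2) * Real.exp (-z) + ∑ k ∈ Icc 1 n, Real.exp (-z * s k))
      = 1 / 2 * Real.log (1 + x) + ∑ k ∈ Icc 1 n, Real.log ((s k + x) / s k) := by
    have hfun : ∀ z : ℝ, ((1 - Real.exp (-x * z)) / z) *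
        ((1 / 2) * Real.exp (-z) + ∑ k ∈ Icc 1 n, Real.exp (-z * s k))
        = 1 / 2 * (((1 - Real.exp (-x * z)) / z) * Real.exp (-z * 1)) +
          ∑ k ∈ Icc 1 n, ((1 - Real.exp (-x * z)) / z) * Real.exp (-z * s k) := by
      intro z
      rw [mul_add, mul_sum, mul_one]
      ring
    simp only [hfun]
    rw [integral_add ((integrableOn_levy x 1 hx one_pos).const_mul _)
        (integrable_finsetSum _ fun k hk => integrableOn_levy x (s k) hx (hspos k hk)),
      integral_const_mul, integral_levy x 1 hx one_pos, div_one,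
      integral_finsetSum _ fun k hk => integrableOn_levy x (s k) hx (hspos k hk)]
    congr 1
    exact sum_congr rfl fun k hk => integral_levy x (s k) hx (hspos k hk)
  change _ = Real.exp (-∫ z in Set.Ioi (0 : ℝ), ((1 - Real.exp (-x * z)) / z) *
      ((1 / 2) * Real.exp (-z) + ∑ k ∈ Icc 1 n, Real.exp (-z * s k)))
  have hquot : ∀ k ∈ Icc 1 n, 0 < (s k + x) / s k := fun k hk =>
    div_pos (by linarith [hspos k hk]) (hspos k hk)
  have hsqrt : Real.exp (1 / 2 * Real.log (1 + x)) = Real.sqrt (1 + x) := by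
    rw [Real.sqrt_eq_rpow, Real.rpow_def_of_pos (by linarith), mul_comm]
  have hprod : Real.exp (∑ k ∈ Icc 1 n, Real.log ((s k + x) / s k))
      = ∏ k ∈ Icc 1 n, (s k + x) / s k := by
    rw [Real.exp_sum]
    exact prod_congr rfl fun k hk => Real.exp_log (hquot k hk)
  rw [hintegral, Real.exp_neg, Real.exp_add, hsqrt, hprod]
  set t := Real.arsinh (Real.sqrt x) with ht
  have hsinh : Real.sinh t = Real.sqrt x := Real.sinh_arsinh _
  have hcosh : Real.cosh t = Real.sqrt (1 + x) := by
    rw [ht, Real.cosh_arsinh, Real.sq_sqrt hx]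
  have hmain := cosh_odd_mul n t
  rw [hsinh, Real.sq_sqrt hx, hcosh] at hmain
  change _ = Real.sqrt (1 + x) * ∏ k ∈ Icc 1 n, (s k + x) / s k at hmain
  rw [← hmain, ← hcosh, ← hsinh, Real.cosh_add_sinh, Real.cosh_sub_sinh, ← Real.exp_nat_mul,
    ← Real.exp_nat_mul, Real.cosh_eq, inv_div]
  push_cast
  rw [mul_neg]
end

section
/- For every natural number n ≥ 1 and every real x ≥ 0, one has φ_{2n}(x) = exp( − ∫_{0}^{∞} ((1 − e^{−xz})/z) · ( Σ_{k=1}^{n} e^{−z sin²(π(2k−1)/(4n))} ) dz ); that is, φ_{2n} is the Laplace transform of an infinitely divisible positive random variable with Lévy measure (dz/z) Σ_{k=1}^{n} e^{−z sin²(π(2k−1)/(4n))} on (0, ∞). -/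
open Real Finset MeasureTheory

/-! With `u = (√(1+x) + √x)²` one has `u⁻¹ = (√(1+x) - √x)²` and `(u + u⁻¹)/2 = 1 + 2x`, so the
denominator of `φ_{2n}` is `2 T_n(1 + 2x)` for the Chebyshev polynomial `T_n`. The roots of `T_n`
are `cos θ = 1 - 2 sin² (θ/2)` with `θ = π(2k-1)/(2n)`; together with `T_n(1) = 1` this gives
`T_n(1 + 2x) = ∏ (1 + x / sin² (π(2k-1)/(4n)))` (`chebyshev_T_eval_one_add_two_mul`).

On the other side, each summand of the integrand is a Frullani integrand for `exp (-·)`, with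
integral `log (1 + x / s)` where `s = sin² (π(2k-1)/(4n))` (`integral_levy_exponential`). -/

lemma sin_levy_pos {n k : ℕ} (hk : k ∈ Finset.Icc 1 n) :
    0 < Real.sin (Real.pi * (2 * (k : ℝ) - 1) / (4 * n)) ^ 2 := by
  obtain ⟨h1, h2⟩ := Finset.mem_Icc.1 hk
  have h1' : (1 : ℝ) ≤ k := by exact_mod_cast h1
  have h2' : (k : ℝ) ≤ n := by exact_mod_cast h2
  have hn : (0 : ℝ) < n := by linarith
  refine pow_pos (Real.sin_pos_of_pos_of_lt_pi ?_ ?_) 2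
  · exact div_pos (mul_pos Real.pi_pos (by linarith)) (by linarith)
  · rw [div_lt_iff₀ (by linarith)]
    exact mul_lt_mul_of_pos_left (by linarith) Real.pi_pos

/-- The integrand is dominated by `x * exp (-s z)`, because `1 - exp (-x z) ≤ x z`. -/
lemma integrableOn_levy_exponential {x s : ℝ} (hx : 0 ≤ x) (hs : 0 < s) :
    IntegrableOn (fun z : ℝ => ((1 - Real.exp (-x * z)) / z) * Real.exp (-z * s))
      (Set.Ioi 0) := by
  have hdom : IntegrableOn (fun z : ℝ => x * Real.exp (-s * z)) (Set.Ioi 0) :=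
    (integrableOn_exp_mul_Ioi (neg_lt_zero.2 hs) 0).const_mul x
  refine Integrable.mono' hdom (Measurable.aestronglyMeasurable (by fun_prop)) ?_
  filter_upwards [ae_restrict_mem measurableSet_Ioi] with z hz
  have hz : 0 < z := hz
  have h1 : Real.exp (-x * z) ≤ 1 := Real.exp_le_one_iff.2 (by nlinarith)
  have h2 : -x * z + 1 ≤ Real.exp (-x * z) := Real.add_one_le_exp _
  rw [Real.norm_of_nonneg
    (mul_nonneg (div_nonneg (by linarith) hz.le) (Real.exp_pos _).le),
    show -z * s = -s * z by ring]
  gcongr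
  rw [div_le_iff₀ hz]
  linarith

lemma integral_levy_exponential {x s : ℝ} (hx : 0 ≤ x) (hs : 0 < s) :
    ∫ z in Set.Ioi (0 : ℝ), ((1 - Real.exp (-x * z)) / z) * Real.exp (-z * s)
      = Real.log (1 + x / s) := by
  have heq : (fun z : ℝ => ((1 - Real.exp (-x * z)) / z) * Real.exp (-z * s))
      = fun z : ℝ => z⁻¹ • (Real.exp (-(s * z)) - Real.exp (-((s + x) * z))) := by
    funext z
    rw [show -((s + x) * z) = -x * z + -z * s by ring, Real.exp_add,
      show -(s * z) = -z * s by ring, smul_eq_mul]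
    ring
  have hint := integrableOn_levy_exponential hx hs
  rw [heq] at hint ⊢
  have hcont : Continuous fun z : ℝ => Real.exp (-z) := by fun_prop
  have hL : Filter.Tendsto (fun z : ℝ => Real.exp (-z)) (nhdsWithin 0 (Set.Ioi 0)) (nhds 1) := by
    have := hcont.tendsto 0
    simp only [neg_zero, Real.exp_zero] at this
    exact this.mono_left nhdsWithin_le_nhds
  rw [Frullani.integral_Ioi_eq (f := fun z : ℝ => Real.exp (-z))
    (hcont.locallyIntegrable.locallyIntegrableOn _) hs (by linarith) hL
    Real.tendsto_exp_neg_atTop_nhds_zero hint]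
  simp [add_div, hs.ne']

lemma chebyshev_T_eval_one_add_two_mul (n : ℕ) (x : ℝ) :
    (Polynomial.Chebyshev.T ℝ n).eval (1 + 2 * x)
      = ∏ k ∈ Finset.Icc 1 n,
          (1 + x / Real.sin (Real.pi * (2 * (k : ℝ) - 1) / (4 * n)) ^ 2) := by
  have hroots : (Polynomial.Chebyshev.T ℝ n).roots = (Multiset.range n).map
      fun k : ℕ => Real.cos ((2 * k + 1) * Real.pi / (2 * n)) := by
    rw [Polynomial.Chebyshev.roots_T_real, Finset.image_val, Finset.range_val]
    exact (Polynomial.Chebyshev.roots_T_real_nodup n).dedup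
  have hsplit : (Polynomial.Chebyshev.T ℝ n).Splits := by
    rw [Polynomial.splits_iff_card_roots, hroots,
      Polynomial.Chebyshev.natDegree_T]
    simp
  have heval (y : ℝ) : (Polynomial.Chebyshev.T ℝ n).eval (1 + 2 * y)
      = (Polynomial.Chebyshev.T ℝ n).leadingCoeff * ∏ k ∈ Finset.Icc 1 n,
          (2 * (y + Real.sin (Real.pi * (2 * (k : ℝ) - 1) / (4 * n)) ^ 2)) := by
    rw [hsplit.eval_eq_prod_roots, hroots, Multiset.map_map,
      ← Finset.range_val, ← Finset.prod_eq_multiset_prod, Finset.range_eq_Ico,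
      ← Finset.Ico_add_one_right_eq_Icc, Finset.prod_Ico_eq_prod_range,
      Finset.prod_Ico_eq_prod_range]
    congr 1
    refine Finset.prod_congr (by simp) fun k _ => ?_
    have h := Real.cos_two_mul' (Real.pi * (2 * ((1 + k : ℕ) : ℝ) - 1) / (4 * n))
    have h' := Real.sin_sq_add_cos_sq (Real.pi * (2 * ((1 + k : ℕ) : ℝ) - 1) / (4 * n))
    have harg : (2 * ((0 + k : ℕ) : ℝ) + 1) * Real.pi / (2 * n)
        = 2 * (Real.pi * (2 * ((1 + k : ℕ) : ℝ) - 1) / (4 * n)) := by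
      push_cast
      field_simp
      ring
    simp only [Function.comp_apply]
    rw [harg]
    linarith
  -- `T_n(1) = 1` eliminates the leading coefficient.
  have h0 := heval 0
  simp only [mul_zero, add_zero, Polynomial.Chebyshev.T_eval_one, zero_add] at h0
  refine (heval x).trans (Eq.trans ?_ (one_mul _))
  conv_rhs => enter [1]; rw [h0]
  rw [mul_assoc, ← Finset.prod_mul_distrib]
  congr 1
  refine Finset.prod_congr rfl fun k hk => ?_
  rw [mul_assoc, mul_one_add, mul_div_cancel₀ _ (sin_levy_pos hk).ne', add_comm x]

lemma sqrt_pow_add_sqrt_pow (n : ℕ) {x : ℝ} (hx : 0 ≤ x) :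
    (Real.sqrt (1 + x) + Real.sqrt x) ^ (2 * n) + (Real.sqrt (1 + x) - Real.sqrt x) ^ (2 * n)
      = 2 * (Polynomial.Chebyshev.T ℝ n).eval (1 + 2 * x) := by
  have hp := Real.sq_sqrt (show 0 ≤ 1 + x by linarith)
  have hq := Real.sq_sqrt hx
  have hp0 : 0 < Real.sqrt (1 + x) := Real.sqrt_pos.2 (by linarith)
  have hq0 := Real.sqrt_nonneg x
  set p := Real.sqrt (1 + x)
  set q := Real.sqrt x
  have hu : 0 < (p + q) ^ 2 := by positivity
  have hinv : ((p + q) ^ 2)⁻¹ = (p - q) ^ 2 := by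
    refine inv_eq_of_mul_eq_one_right ?_
    rw [← mul_pow, show (p + q) * (p - q) = p ^ 2 - q ^ 2 by ring, hp, hq]
    ring
  have hcosh : Real.cosh (Real.log ((p + q) ^ 2)) = 1 + 2 * x := by
    rw [Real.cosh_log hu, hinv]
    linarith
  rw [← hcosh, Polynomial.Chebyshev.T_real_cosh, Int.cast_natCast, ← Real.log_pow,
    Real.cosh_log (by positivity), ← inv_pow, hinv, ← pow_mul, ← pow_mul]
  ring

theorem phi_even_levy_khintchine (n : ℕ) (hn : 1 ≤ n) (x : ℝ) (hx : 0 ≤ x) :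
    2 / ((Real.sqrt (1 + x) + Real.sqrt x) ^ (2 * n)
          + (Real.sqrt (1 + x) - Real.sqrt x) ^ (2 * n)) =
      Real.exp (-∫ z in Set.Ioi (0 : ℝ),
        ((1 - Real.exp (-x * z)) / z) *
          ∑ k ∈ Finset.Icc 1 n,
            Real.exp (-z * Real.sin (Real.pi * (2 * (k : ℝ) - 1) / (4 * n)) ^ 2)) := by
  have hpos : ∀ k ∈ Finset.Icc 1 n,
      0 < 1 + x / Real.sin (Real.pi * (2 * (k : ℝ) - 1) / (4 * n)) ^ 2 := fun k hk =>
    add_pos_of_pos_of_nonneg one_pos (div_nonneg hx (sin_levy_pos hk).le)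
  simp_rw [Finset.mul_sum]
  rw [integral_finsetSum _ fun k hk => integrableOn_levy_exponential hx (sin_levy_pos hk),
    Finset.sum_congr rfl fun k hk => integral_levy_exponential hx (sin_levy_pos hk),
    Real.exp_neg, Real.exp_sum, Finset.prod_congr rfl fun k hk => Real.exp_log (hpos k hk),
    sqrt_pow_add_sqrt_pow n hx, chebyshev_T_eval_one_add_two_mul n]
  have := (Finset.prod_pos hpos).ne'
  field_simp
end

section
/- For every real x ≥ 0, one has ∫_{0}^{∞} ((1 − e^{−xz})/z) · ( (1/π) ∫_{0}^{1} e^{−hz} / √(h(1−h)) dh ) dz = 2 log( √(1+x) + √x ). Consequently, for every t > 0, exp( − t ∫_{0}^{∞} ((1 − e^{−xz})/z) (1/π)∫_{0}^{1} e^{−hz}/√(h(1−h)) dh dz ) = ( √(1+x) + √x )^{−2t}. -/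
/-!
For `z > 0` one has `(1 - e^{-xz}) / z = ∫_0^x e^{-sz} ds`, so the left-hand side is the triple
integral of the nonnegative function `e^{-(s+h)z} / (π √(h(1-h)))` over `z > 0`, `0 < s < x`,
`0 < h < 1`. By Tonelli's theorem (applied to lower Lebesgue integrals, so that no integrability
has to be known beforehand) the integral may be taken in the order `z`, `h`, `s`:

* `∫_0^∞ e^{-(s+h)z} dz = 1 / (s+h)` (`lintegral_exp_Ioi`);
* `∫_0^1 dh / ((s+h) √(h(1-h))) = π / √(s(1+s))` (`lintegral_stieltjes`), which is `π` times the
  Stieltjes transform of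
  the arc sine law, with a primitive given by an arc sine of a Möbius function of `h`;
* `∫_0^x ds / √(s(1+s)) = 2 log(√(1+x) + √x)` (`lintegral_inv_sqrt`).

The exponential form follows by exponentiating.
-/

open Real MeasureTheory

/-- The fundamental theorem of calculus for the lower integral of a nonnegative derivative, which
may be unbounded near the endpoints. -/
lemma lintegral_Ioo_of_hasDerivAt {F f : ℝ → ℝ} {a b : ℝ} (hab : a ≤ b)
    (hc : ContinuousOn F (Set.Icc a b)) (hd : ∀ t ∈ Set.Ioo a b, HasDerivAt F (f t) t)
    (h0 : ∀ t ∈ Set.Ioo a b, 0 ≤ f t) :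
    ∫⁻ t in Set.Ioo a b, ENNReal.ofReal (f t) = ENNReal.ofReal (F b - F a) := by
  have hi : IntegrableOn f (Set.Ioc a b) :=
    intervalIntegral.integrableOn_deriv_of_nonneg hc hd h0
  have hii : IntervalIntegrable f volume a b :=
    (intervalIntegrable_iff_integrableOn_Ioc_of_le hab).2 hi
  rw [← intervalIntegral.integral_eq_sub_of_hasDerivAt_of_le hab hc hd hii,
    intervalIntegral.integral_of_le hab, integral_Ioc_eq_integral_Ioo,
    ofReal_integral_eq_lintegral_ofReal (hi.mono_set Set.Ioo_subset_Ioc_self)]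
  exact (ae_restrict_iff' measurableSet_Ioo).2 (Filter.Eventually.of_forall h0)

lemma lintegral_exp_Ioi {c : ℝ} (hc : 0 < c) :
    ∫⁻ z in Set.Ioi (0 : ℝ), ENNReal.ofReal (rexp (-c * z)) = ENNReal.ofReal (1 / c) := by
  rw [← ofReal_integral_eq_lintegral_ofReal (integrableOn_exp_mul_Ioi (by linarith) 0)
    (Filter.Eventually.of_forall fun z => (exp_pos _).le),
    integral_exp_mul_Ioi (by linarith) 0]
  congr 1
  simp [neg_div_neg_eq]

lemma lintegral_exp_Ioo {x z : ℝ} (hx : 0 ≤ x) (hz : 0 < z) :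
    ∫⁻ s in Set.Ioo 0 x, ENNReal.ofReal (rexp (-s * z)) =
      ENNReal.ofReal ((1 - rexp (-x * z)) / z) := by
  rw [lintegral_Ioo_of_hasDerivAt (F := fun s => -rexp (-s * z) / z) hx (by fun_prop)
    (fun t _ => ?_) (fun t _ => (exp_pos _).le)]
  · congr 1
    simp
    ring
  · have h1 : HasDerivAt (fun s : ℝ => -s * z) (-1 * z) t := (hasDerivAt_id t).neg.mul_const z
    refine (h1.exp.neg.div_const z).congr_deriv ?_
    field_simp

/-- The Stieltjes transform of the arc sine law, multiplied by `π`. -/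
lemma lintegral_stieltjes {s : ℝ} (hs : 0 < s) :
    ∫⁻ h in Set.Ioo (0 : ℝ) 1, ENNReal.ofReal (1 / √(h * (1 - h)) * (1 / (s + h))) =
      ENNReal.ofReal (π / √(s * (1 + s))) := by
  have hr : 0 < √(s * (1 + s)) := by positivity
  rw [lintegral_Ioo_of_hasDerivAt
    (F := fun h => arcsin (((1 + 2 * s) * h - s) / (s + h)) / √(s * (1 + s))) zero_le_one ?_
    (fun h hh => ?_) (fun h hh => ?_)]
  · have e1 : ((1 + 2 * s) * 1 - s) / (s + 1) = 1 := by field_simp; ring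
    have e0 : ((1 + 2 * s) * 0 - s) / (s + 0) = -1 := by field_simp; ring
    simp only [e1, e0, arcsin_one, arcsin_neg_one]
    congr 1
    ring
  · refine (continuous_arcsin.comp_continuousOn ?_).div_const _
    refine ContinuousOn.div (by fun_prop) (by fun_prop) fun h hh => ?_
    have := hh.1
    positivity
  · obtain ⟨h0, h1⟩ := hh
    have hq : 0 < 1 - h := by linarith
    have hsh : 0 < s + h := by linarith
    set v := ((1 + 2 * s) * h - s) / (s + h) with hv
    have hv1 : 1 - v = 2 * s * (1 - h) / (s + h) := by rw [hv]; field_simp; ring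
    have hv2 : 1 + v = 2 * (1 + s) * h / (s + h) := by rw [hv]; field_simp; ring
    have p1 : 0 < 1 - v := by rw [hv1]; positivity
    have p2 : 0 < 1 + v := by rw [hv2]; positivity
    have hsq : √(1 - v ^ 2) = 2 * √(s * (1 + s)) * √(h * (1 - h)) / (s + h) := by
      rw [sqrt_eq_iff_mul_self_eq (by nlinarith) (by positivity)]
      have a1 := mul_self_sqrt (show 0 ≤ s * (1 + s) by positivity)
      have a2 := mul_self_sqrt (show 0 ≤ h * (1 - h) by positivity)
      symm
      calc _ = 4 * (√(s * (1 + s)) * √(s * (1 + s))) * (√(h * (1 - h)) * √(h * (1 - h)))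
              / (s + h) ^ 2 := by field_simp; ring
        _ = (1 - v) * (1 + v) := by rw [a1, a2, hv1, hv2]; field_simp; ring
        _ = _ := by ring
    have hdv : HasDerivAt (fun h => ((1 + 2 * s) * h - s) / (s + h))
        ((2 * s * (1 + s)) / (s + h) ^ 2) h := by
      refine ((((hasDerivAt_id h).const_mul (1 + 2 * s)).sub_const s).div
        ((hasDerivAt_id h).const_add s) hsh.ne').congr_deriv ?_
      simp only [id]
      ring
    have hw : 0 < √(h * (1 - h)) := by positivity
    refine (((hasDerivAt_arcsin (by linarith) (by linarith)).comp h hdv).div_const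
      (√(s * (1 + s)))).congr_deriv ?_
    rw [← hv, hsq]
    have a1 := sq_sqrt (show 0 ≤ s * (1 + s) by positivity)
    field_simp
    rw [a1]
  · have := hh.1
    positivity

lemma lintegral_inv_sqrt {x : ℝ} (hx : 0 ≤ x) :
    ∫⁻ s in Set.Ioo 0 x, ENNReal.ofReal (1 / √(s * (1 + s))) =
      ENNReal.ofReal (2 * log (√(1 + x) + √x)) := by
  rw [lintegral_Ioo_of_hasDerivAt (F := fun s => 2 * log (√(1 + s) + √s)) hx ?_
    (fun s hs => ?_) (fun s hs => by positivity)]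
  · simp
  · refine continuousOn_const.mul (ContinuousOn.log (by fun_prop) fun s hs => ?_)
    have := hs.1
    positivity
  · have h0 : 0 < s := hs.1
    have d1 : HasDerivAt (fun s : ℝ => √(1 + s)) (1 / (2 * √(1 + s))) s :=
      ((hasDerivAt_id s).const_add 1).sqrt (by simp; positivity)
    have d2 := hasDerivAt_sqrt h0.ne'
    have p1 : 0 < √(1 + s) := by positivity
    have p2 : 0 < √s := by positivity
    refine (((d1.add d2).log (by simp; positivity)).const_mul 2).congr_deriv ?_
    rw [sqrt_mul h0.le, Pi.add_apply]
    field_simp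
    ring

/-- The triple integral, evaluated by Tonelli's theorem. -/
lemma lintegral_triple {x : ℝ} (hx : 0 ≤ x) :
    ∫⁻ z in Set.Ioi (0 : ℝ), ∫⁻ s in Set.Ioo 0 x, ∫⁻ h in Set.Ioo (0 : ℝ) 1,
      ENNReal.ofReal (1 / π * (1 / √(h * (1 - h))) * rexp (-(s + h) * z)) =
      ENNReal.ofReal (2 * log (√(1 + x) + √x)) := by
  rw [lintegral_lintegral_swap (Measurable.aemeasurable (by fun_prop)), ← lintegral_inv_sqrt hx]
  refine setLIntegral_congr_fun measurableSet_Ioo fun s hs => ?_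
  have h0 : 0 < s := hs.1
  rw [lintegral_lintegral_swap (Measurable.aemeasurable (by fun_prop))]
  calc _ = ∫⁻ h in Set.Ioo (0 : ℝ) 1, ENNReal.ofReal (1 / π) *
        ENNReal.ofReal (1 / √(h * (1 - h)) * (1 / (s + h))) := by
        refine setLIntegral_congr_fun measurableSet_Ioo fun h hh => ?_
        have h1 : 0 < h := hh.1
        have hp : 0 ≤ 1 / π * (1 / √(h * (1 - h))) := by positivity
        simp only [ENNReal.ofReal_mul hp]
        rw [lintegral_const_mul _ (by fun_prop), lintegral_exp_Ioi (by linarith),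
          ← ENNReal.ofReal_mul hp, ← ENNReal.ofReal_mul (by positivity), mul_assoc]
    _ = _ := by
        rw [lintegral_const_mul _ (by fun_prop), lintegral_stieltjes h0,
          ← ENNReal.ofReal_mul (by positivity)]
        congr 1
        field_simp

/-- The integrand of the Lévy–Khintchine exponent as a double lower integral. -/
lemma integrand_eq {x z : ℝ} (hx : 0 ≤ x) (hz : 0 < z) :
    ((1 - rexp (-x * z)) / z) *
      ((1 / π) * ∫ h in (0:ℝ)..1, rexp (-h * z) / √(h * (1 - h))) =
    (∫⁻ s in Set.Ioo 0 x, ∫⁻ h in Set.Ioo (0 : ℝ) 1,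
      ENNReal.ofReal (1 / π * (1 / √(h * (1 - h))) * rexp (-(s + h) * z))).toReal := by
  have hfac : ∀ s h : ℝ, ENNReal.ofReal (1 / π * (1 / √(h * (1 - h))) * rexp (-(s + h) * z)) =
      ENNReal.ofReal (rexp (-s * z)) * (ENNReal.ofReal (1 / π) *
        ENNReal.ofReal (rexp (-h * z) / √(h * (1 - h)))) := fun s h => by
    rw [← ENNReal.ofReal_mul (by positivity), ← ENNReal.ofReal_mul (by positivity),
      show -(s + h) * z = -s * z + -h * z by ring, exp_add]
    congr 1
    ring
  have hnn : 0 ≤ (1 - rexp (-x * z)) / z := by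
    have : rexp (-x * z) ≤ 1 := exp_le_one_iff.2 (by nlinarith)
    exact div_nonneg (by linarith) hz.le
  simp only [hfac]
  have hin : ∀ s : ℝ, ∫⁻ h in Set.Ioo (0 : ℝ) 1, ENNReal.ofReal (rexp (-s * z)) *
      (ENNReal.ofReal (1 / π) * ENNReal.ofReal (rexp (-h * z) / √(h * (1 - h)))) =
      ENNReal.ofReal (rexp (-s * z)) * (ENNReal.ofReal (1 / π) *
        ∫⁻ h in Set.Ioo (0 : ℝ) 1, ENNReal.ofReal (rexp (-h * z) / √(h * (1 - h)))) := fun s => by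
    rw [lintegral_const_mul _ (by fun_prop), lintegral_const_mul _ (by fun_prop)]
  simp only [hin]
  rw [lintegral_mul_const _ (by fun_prop), lintegral_exp_Ioo hx hz, ENNReal.toReal_mul,
    ENNReal.toReal_mul, ENNReal.toReal_ofReal hnn, ENNReal.toReal_ofReal (by positivity),
    intervalIntegral.integral_of_le zero_le_one, integral_Ioc_eq_integral_Ioo,
    integral_eq_lintegral_of_nonneg_ae (Filter.Eventually.of_forall fun h => by
      simp only [Pi.zero_apply]; positivity) (Measurable.aestronglyMeasurable (by fun_prop))]

lemma levy_exponent {x : ℝ} (hx : 0 ≤ x) :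
    (∫ z in Set.Ioi (0 : ℝ),
        ((1 - rexp (-x * z)) / z) *
          ((1 / π) * ∫ h in (0:ℝ)..1, rexp (-h * z) / √(h * (1 - h)))) =
      2 * log (√(1 + x) + √x) := by
  rw [setIntegral_congr_fun measurableSet_Ioi fun z hz => integrand_eq hx hz]
  have hm : Measurable fun z : ℝ => ∫⁻ s in Set.Ioo 0 x, ∫⁻ h in Set.Ioo (0 : ℝ) 1,
      ENNReal.ofReal (1 / π * (1 / √(h * (1 - h))) * rexp (-(s + h) * z)) := by
    fun_prop
  have ht := lintegral_triple hx
  rw [integral_toReal hm.aemeasurable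
    (ae_lt_top hm (by rw [ht]; exact ENNReal.ofReal_ne_top)), ht, ENNReal.toReal_ofReal]
  have h1 : 1 ≤ √(1 + x) := one_le_sqrt.2 (by linarith)
  have := log_nonneg (show 1 ≤ √(1 + x) + √x by linarith [sqrt_nonneg x])
  positivity

theorem arcsine_levy_khintchine (x : ℝ) (hx : 0 ≤ x) :
    (∫ z in Set.Ioi (0 : ℝ),
        ((1 - Real.exp (-x * z)) / z) *
          ((1 / Real.pi) * ∫ h in (0:ℝ)..1, Real.exp (-h * z) / Real.sqrt (h * (1 - h)))) =
      2 * Real.log (Real.sqrt (1 + x) + Real.sqrt x) ∧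
    ∀ t : ℝ, 0 < t →
      Real.exp (-t * ∫ z in Set.Ioi (0 : ℝ),
          ((1 - Real.exp (-x * z)) / z) *
            ((1 / Real.pi) * ∫ h in (0:ℝ)..1, Real.exp (-h * z) / Real.sqrt (h * (1 - h)))) =
        (Real.sqrt (1 + x) + Real.sqrt x) ^ (-(2 * t)) := by
  refine ⟨levy_exponent hx, fun t _ => ?_⟩
  rw [levy_exponent hx, rpow_def_of_pos (by positivity)]
  congr 1
  ring
end

section
/- For every real x ≥ 0, one has ∫_{0}^{1} log( 1 + x / sin²(πu/2) ) du = 2 log( √x + √(1+x) ). -/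
/-!
Put `A = (√x + √(1+x))²`, so that `A ≥ 1` and `A + A⁻¹ = 2(1 + 2x)`. For `θ` real,
`‖e^{iθ} - A‖² = A² - 2A cos θ + 1 = 4A (x + sin²(θ/2))` and `‖e^{iθ} - 1‖² = 4 sin²(θ/2)`; hence,
away from the zeros of `sin (θ/2)`,
`log (1 + x / sin²(θ/2)) = 2 log ‖e^{iθ} - A‖ - log A - 2 log ‖e^{iθ} - 1‖`.
By Jensen's formula the average of `log ‖e^{iθ} - a‖` over the unit circle is `log⁺ ‖a‖`, so the
left side has circle average `2 log A - log A - 0 = log A`. The symmetry `θ ↦ 2π - θ` and the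
substitution `θ = πu` turn this average into the integral over `[0, 1]`.
-/

open Real MeasureTheory

lemma norm_circleMap_sub_sq (a θ : ℝ) :
    ‖circleMap 0 1 θ - (a : ℂ)‖ ^ 2 = (1 - a) ^ 2 + 4 * a * Real.sin (θ / 2) ^ 2 := by
  have h : Real.cos θ = 1 - 2 * Real.sin (θ / 2) ^ 2 := by
    have h1 := Real.cos_two_mul (θ / 2)
    rw [mul_div_cancel₀ θ two_ne_zero] at h1
    linarith [Real.sin_sq_add_cos_sq (θ / 2)]
  rw [← Complex.normSq_eq_norm_sq, Complex.normSq_apply]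
  simp only [circleMap, Complex.sub_re, Complex.sub_im, Complex.ofReal_re, Complex.ofReal_im,
    zero_add, Complex.ofReal_one, one_mul, Complex.exp_ofReal_mul_I_re,
    Complex.exp_ofReal_mul_I_im, sub_zero]
  linear_combination Real.sin_sq_add_cos_sq θ - 2 * a * h

lemma integral_log_norm_circleMap_sub {a : ℝ} (ha : 1 ≤ a) :
    ∫ θ in (0:ℝ)..2 * π, Real.log ‖circleMap 0 1 θ - (a : ℂ)‖ = 2 * π * Real.log a := by
  have h := circleAverage_log_norm_sub_const_eq_posLog (a := (a : ℂ))
  have hn : ‖(a : ℂ)‖ = a := by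
    rw [Complex.norm_real, Real.norm_of_nonneg (by linarith)]
  rw [hn, posLog_eq_log (by rwa [abs_of_nonneg (by linarith)]), circleAverage_def, smul_eq_mul] at h
  rw [← h, mul_inv_cancel_left₀ (by positivity)]

lemma intervalIntegrable_log_norm_circleMap_sub (a : ℝ) :
    IntervalIntegrable (fun θ => Real.log ‖circleMap 0 1 θ - (a : ℂ)‖) volume 0 (2 * π) :=
  circleIntegrable_log_norm_sub_const (a := (a : ℂ)) (c := 0) 1

lemma log_one_add_div_sin_sq {x A θ : ℝ} (hx : 0 ≤ x) (hA : 1 ≤ A)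
    (hAx : (1 - A) ^ 2 = 4 * A * x) (hs : 0 < Real.sin (θ / 2)) :
    2 * Real.log ‖circleMap 0 1 θ - (A : ℂ)‖ - Real.log A
        - 2 * Real.log ‖circleMap 0 1 θ - ((1 : ℝ) : ℂ)‖
      = Real.log (1 + x / Real.sin (θ / 2) ^ 2) := by
  have e (a : ℝ) : 2 * Real.log ‖circleMap 0 1 θ - (a : ℂ)‖
      = Real.log ((1 - a) ^ 2 + 4 * a * Real.sin (θ / 2) ^ 2) := by
    rw [← norm_circleMap_sub_sq, Real.log_pow]; norm_num
  have hs2 : 0 < Real.sin (θ / 2) ^ 2 := by positivity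
  rw [e, e, hAx, ← Real.log_div (by positivity) (by positivity),
    ← Real.log_div (by positivity) (by norm_num; positivity)]
  congr 1
  field_simp
  ring

theorem thorin_integral_log (x : ℝ) (hx : 0 ≤ x) :
    ∫ u in (0:ℝ)..1, Real.log (1 + x / Real.sin (Real.pi * u / 2) ^ 2) =
      2 * Real.log (Real.sqrt x + Real.sqrt (1 + x)) := by
  set A : ℝ := (√x + √(1 + x)) ^ 2 with hAdef
  have h1 : √x ^ 2 = x := Real.sq_sqrt hx
  have h2 : √(1 + x) ^ 2 = 1 + x := Real.sq_sqrt (by linarith)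
  have hA : 1 ≤ A := by
    have : 0 ≤ √x * √(1 + x) := by positivity
    nlinarith
  -- `1 - A = -2 √x (√x + √(1+x))`
  have hAx : (1 - A) ^ 2 = 4 * A * x := by
    have h3 : 1 - A = -2 * √x * (√x + √(1 + x)) := by
      rw [hAdef]; linear_combination h1 - h2
    rw [h3, mul_pow, ← hAdef, mul_pow, h1]; ring
  have hlogA : Real.log A = 2 * Real.log (√x + √(1 + x)) := by
    rw [hAdef, Real.log_pow]; norm_num
  set G : ℝ → ℝ := fun θ => Real.log (1 + x / Real.sin (θ / 2) ^ 2) with hG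
  have hcongr : ∀ θ ∈ Set.Ioo 0 (2 * π),
      2 * Real.log ‖circleMap 0 1 θ - (A : ℂ)‖ - Real.log A
        - 2 * Real.log ‖circleMap 0 1 θ - ((1 : ℝ) : ℂ)‖ = G θ := fun θ hθ =>
    log_one_add_div_sin_sq hx hA hAx
      (Real.sin_pos_of_pos_of_lt_pi (by linarith [hθ.1]) (by linarith [hθ.2]))
  have iA := (intervalIntegrable_log_norm_circleMap_sub A).const_mul 2
  have i1 := (intervalIntegrable_log_norm_circleMap_sub 1).const_mul 2
  have iA' := iA.sub (intervalIntegrable_const (c := Real.log A))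
  have hu : Set.uIoo 0 (2 * π) = Set.Ioo 0 (2 * π) := Set.uIoo_of_le (by positivity)
  have hGi : IntervalIntegrable G volume 0 (2 * π) :=
    (iA'.sub i1).congr_uIoo (by rw [hu]; exact hcongr)
  have hfull : ∫ θ in (0:ℝ)..2 * π, G θ = 2 * π * Real.log A := by
    rw [← intervalIntegral.integral_congr_uIoo (by rw [hu]; exact hcongr),
      intervalIntegral.integral_sub iA' i1,
      intervalIntegral.integral_sub iA intervalIntegrable_const,
      intervalIntegral.integral_const_mul, intervalIntegral.integral_const_mul,
      integral_log_norm_circleMap_sub hA, integral_log_norm_circleMap_sub le_rfl,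
      intervalIntegral.integral_const]
    simp only [Real.log_one, smul_eq_mul]
    ring
  have hsymm : ∫ θ in π..2 * π, G θ = ∫ θ in (0:ℝ)..π, G θ := by
    have h := intervalIntegral.integral_comp_sub_left (a := 0) (b := π) G (2 * π)
    rw [sub_zero, show 2 * π - π = π by ring] at h
    rw [← h]
    refine intervalIntegral.integral_congr fun θ _ => ?_
    simp only [hG]
    rw [show (2 * π - θ) / 2 = π - θ / 2 by ring, Real.sin_pi_sub]
  have hpi : π ∈ Set.uIcc 0 (2 * π) := by
    rw [Set.uIcc_of_le (by positivity)]
    exact ⟨pi_pos.le, by linarith [pi_pos]⟩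
  have hsplit := intervalIntegral.integral_add_adjacent_intervals
    (hGi.mono_set (Set.uIcc_subset_uIcc_left hpi))
    (hGi.mono_set (Set.uIcc_subset_uIcc_right hpi))
  have hsub := intervalIntegral.integral_comp_mul_left (a := 0) (b := 1) G pi_ne_zero
  rw [mul_zero, mul_one, smul_eq_mul] at hsub
  rw [← hlogA]
  refine hsub.trans ?_
  rw [inv_mul_eq_iff_eq_mul₀ pi_ne_zero]
  linarith
end
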